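/- arXiv:2301.12480 — 2 statements merged into one kernel-verified Lean document; each statement's English description precedes it below -/
import Mathlib

section
/- Let μ ∈ ℝ and σ > 0, and define f : ℝ → [0,1] by f(x) = max{ (4/9)(1 + z₊²)^{-1}, (4/3)(1 + z₊²)^{-1} − 1/3 } where z = (x−μ)/σ and z₊ = max(z,0). Then for every unimodal Borel probability measure Q on ℝ with finite second moment, mean ≤ μ and variance ≤ σ², and for every α ∈ (0,1), Q({x : f(x) ≤ α}) ≤ α. That is, f = max{(4/9)P₀, (4P₀−1)/3} with P₀(x) = (1+z₊²)^{-1} is a p-variable for H_U(μ,σ). -/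
open MeasureTheory Set
open scoped ENNReal

/-- Mean of a distribution on ℝ. -/
noncomputable def distMean (Q : Measure ℝ) : ℝ := ∫ x, x ∂Q

/-- Variance of a distribution on ℝ. -/
noncomputable def distVar (Q : Measure ℝ) : ℝ := ∫ x, (x - distMean Q)^2 ∂Q

/-- `H(μ,σ)`: Borel probability measures on ℝ with finite second moment,
mean at most `μ`, and variance at most `σ²`. -/
def MemH (μ σ : ℝ) (Q : Measure ℝ) : Prop :=
  IsProbabilityMeasure Q ∧ Integrable (fun x => x^2) Q ∧
    distMean Q ≤ μ ∧ distVar Q ≤ σ^2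

/-- A distribution on ℝ is unimodal: for some `x₀` it is a nonnegative multiple of
the Dirac mass at `x₀` plus a measure with a Lebesgue density that is nondecreasing
on `(-∞, x₀)` and nonincreasing on `(x₀, ∞)`. -/
def Unimodal (Q : Measure ℝ) : Prop :=
  ∃ (x₀ : ℝ) (c : ℝ≥0∞) (f : ℝ → ℝ≥0∞),
    Q = c • Measure.dirac x₀ + volume.withDensity f ∧
    MonotoneOn f (Iio x₀) ∧ AntitoneOn f (Ioi x₀)

/-- `f = max{(4/9)P₀, (4P₀−1)/3}` with `P₀(x) = (1 + (((x−μ)/σ)₊)²)⁻¹`. -/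
noncomputable def pU (μ σ : ℝ) (x : ℝ) : ℝ :=
  max ((4/9) * (1 + (max ((x - μ) / σ) 0)^2)⁻¹)
    ((4/3) * (1 + (max ((x - μ) / σ) 0)^2)⁻¹ - 1/3)

/-- Sign pattern `+, -, +` to the right of `m`, with nonnegative integral up to the last
sign change. -/
def BalancedRight (φ : ℝ → ℝ) (m : ℝ) : Prop :=
  ∃ p q, m < p ∧ p ≤ q ∧ (∀ x ∈ Ioo m p, 0 ≤ φ x) ∧ (∀ x ∈ Ico p q, φ x ≤ 0) ∧
    (∀ x ∈ Ici q, 0 ≤ φ x) ∧ 0 ≤ ∫ x in m..q, φ x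

/-- Sign pattern `+, -, +` to the left of `m`, with nonnegative integral from the first
sign change. -/
def BalancedLeft (φ : ℝ → ℝ) (m : ℝ) : Prop :=
  ∃ p q, q ≤ p ∧ p < m ∧ (∀ x ∈ Ioo p m, 0 ≤ φ x) ∧ (∀ x ∈ Ioc q p, φ x ≤ 0) ∧
    (∀ x ∈ Iic q, 0 ≤ φ x) ∧ 0 ≤ ∫ x in q..m, φ x

theorem balancedRight_of_nonneg {φ : ℝ → ℝ} {m : ℝ} (h : ∀ x, m < x → 0 ≤ φ x) :
    BalancedRight φ m := by
  refine ⟨m + 1, m + 1, by linarith, le_rfl, fun x hx => h x hx.1, fun x hx => ?_,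
    fun x hx => h x ?_, ?_⟩
  · exact absurd hx.2 (not_lt.2 hx.1)
  · linarith [mem_Ici.1 hx]
  · rw [intervalIntegral.integral_of_le (by linarith)]
    exact setIntegral_nonneg measurableSet_Ioc fun x hx => h x hx.1

theorem balancedLeft_of_nonneg {φ : ℝ → ℝ} {m : ℝ} (h : ∀ x, x < m → 0 ≤ φ x) :
    BalancedLeft φ m := by
  refine ⟨m - 1, m - 1, le_rfl, by linarith, fun x hx => h x hx.2, fun x hx => ?_,
    fun x hx => h x ?_, ?_⟩
  · exact absurd hx.2 (not_le.2 hx.1)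
  · linarith [mem_Iic.1 hx]
  · rw [intervalIntegral.integral_of_le (by linarith), integral_Ioc_eq_integral_Ioo]
    exact setIntegral_nonneg measurableSet_Ioo fun x hx => h x hx.2

theorem BalancedRight.comp_affine {φ : ℝ → ℝ} {a r x₀ : ℝ} (hr : 0 < r)
    (h : BalancedRight φ ((x₀ - a) / r)) : BalancedRight (fun x => φ ((x - a) / r)) x₀ := by
  obtain ⟨p, q, hmp, hpq, h1, h2, h3, h4⟩ := h
  rw [div_lt_iff₀ hr] at hmp
  refine ⟨p * r + a, q * r + a, by linarith, by nlinarith, fun x hx => h1 _ ⟨?_, ?_⟩,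
    fun x hx => h2 _ ⟨?_, ?_⟩, fun x hx => h3 _ ?_, ?_⟩
  · exact div_lt_div_of_pos_right (by linarith [hx.1]) hr
  · rw [div_lt_iff₀ hr]; linarith [hx.2]
  · rw [le_div_iff₀ hr]; linarith [hx.1]
  · rw [div_lt_iff₀ hr]; linarith [hx.2]
  · rw [mem_Ici, le_div_iff₀ hr]; linarith [mem_Ici.1 hx]
  · simp only [sub_div]
    rw [intervalIntegral.integral_comp_div_sub φ hr.ne', ← sub_div, ← sub_div, add_sub_cancel_right,
      mul_div_cancel_right₀ _ hr.ne']
    exact smul_nonneg hr.le h4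

theorem BalancedLeft.comp_affine {φ : ℝ → ℝ} {a r x₀ : ℝ} (hr : 0 < r)
    (h : BalancedLeft φ ((x₀ - a) / r)) : BalancedLeft (fun x => φ ((x - a) / r)) x₀ := by
  obtain ⟨p, q, hqp, hpm, h1, h2, h3, h4⟩ := h
  rw [lt_div_iff₀ hr] at hpm
  refine ⟨p * r + a, q * r + a, by nlinarith, by linarith, fun x hx => h1 _ ⟨?_, ?_⟩,
    fun x hx => h2 _ ⟨?_, ?_⟩, fun x hx => h3 _ ?_, ?_⟩
  · rw [lt_div_iff₀ hr]; linarith [hx.1]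
  · exact div_lt_div_of_pos_right (by linarith [hx.2]) hr
  · rw [lt_div_iff₀ hr]; linarith [hx.1]
  · rw [div_le_iff₀ hr]; linarith [hx.2]
  · rw [mem_Iic, div_le_iff₀ hr]; linarith [mem_Iic.1 hx]
  · simp only [sub_div]
    rw [intervalIntegral.integral_comp_div_sub φ hr.ne', ← sub_div, ← sub_div, add_sub_cancel_right,
      mul_div_cancel_right₀ _ hr.ne']
    exact smul_nonneg hr.le h4

theorem BalancedRight.setIntegral_mul_nonneg {φ g : ℝ → ℝ} {m : ℝ} (h : BalancedRight φ m)
    (hg : AntitoneOn g (Ioi m)) (hg0 : ∀ x, 0 ≤ g x)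
    (hφ : ∀ u v, IntervalIntegrable φ volume u v)
    (hint : Integrable (fun x => g x * φ x)) : 0 ≤ ∫ x in Ioi m, g x * φ x := by
  obtain ⟨p, q, hmp, hpq, h1, h2, h3, h4⟩ := h
  have hmq : m < q := hmp.trans_le hpq
  have hdisj : Disjoint (Ioo m q) (Ici q) :=
    Set.disjoint_left.2 fun x hx hx' => absurd hx.2 (not_lt.2 hx')
  rw [← Ioo_union_Ici_eq_Ioi hmq, setIntegral_union hdisj measurableSet_Ici hint.integrableOn
    hint.integrableOn]
  have hfar : 0 ≤ ∫ x in Ici q, g x * φ x :=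
    setIntegral_nonneg measurableSet_Ici fun x hx => mul_nonneg (hg0 x) (h3 x hx)
  have hnear : ∫ x in Ioo m q, g p * φ x ≤ ∫ x in Ioo m q, g x * φ x := by
    refine setIntegral_mono_on ?_ hint.integrableOn measurableSet_Ioo fun x hx => ?_
    · exact (((hφ m q).1.mono_set Ioo_subset_Ioc_self).const_mul (g p))
    · rcases lt_or_ge x p with hxp | hxp
      · exact mul_le_mul_of_nonneg_right (hg hx.1 hmp hxp.le) (h1 x ⟨hx.1, hxp⟩)
      · exact mul_le_mul_of_nonpos_right (hg hmp hx.1 hxp) (h2 x ⟨hxp, hx.2⟩)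
  rw [integral_const_mul, ← integral_Ioc_eq_integral_Ioo,
    ← intervalIntegral.integral_of_le hmq.le] at hnear
  linarith [mul_nonneg (hg0 p) h4]

theorem BalancedLeft.setIntegral_mul_nonneg {φ g : ℝ → ℝ} {m : ℝ} (h : BalancedLeft φ m)
    (hg : MonotoneOn g (Iio m)) (hg0 : ∀ x, 0 ≤ g x)
    (hφ : ∀ u v, IntervalIntegrable φ volume u v)
    (hint : Integrable (fun x => g x * φ x)) : 0 ≤ ∫ x in Iio m, g x * φ x := by
  obtain ⟨p, q, hqp, hpm, h1, h2, h3, h4⟩ := h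
  have hqm : q < m := hqp.trans_lt hpm
  have hdisj : Disjoint (Iic q) (Ioo q m) :=
    Set.disjoint_left.2 fun x hx hx' => absurd hx'.1 (not_lt.2 hx)
  rw [← Iic_union_Ioo_eq_Iio hqm, setIntegral_union hdisj measurableSet_Ioo hint.integrableOn
    hint.integrableOn]
  have hfar : 0 ≤ ∫ x in Iic q, g x * φ x :=
    setIntegral_nonneg measurableSet_Iic fun x hx => mul_nonneg (hg0 x) (h3 x hx)
  have hnear : ∫ x in Ioo q m, g p * φ x ≤ ∫ x in Ioo q m, g x * φ x := by
    refine setIntegral_mono_on ?_ hint.integrableOn measurableSet_Ioo fun x hx => ?_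
    · exact (((hφ q m).1.mono_set Ioo_subset_Ioc_self).const_mul (g p))
    · rcases le_or_gt x p with hxp | hxp
      · exact mul_le_mul_of_nonpos_right (hg hx.2 hpm hxp) (h2 x ⟨hx.1, hxp⟩)
      · exact mul_le_mul_of_nonneg_right (hg hpm hx.2 hxp.le) (h1 x ⟨hxp, hx.2⟩)
  rw [integral_const_mul, ← integral_Ioc_eq_integral_Ioo,
    ← intervalIntegral.integral_of_le hqm.le] at hnear
  linarith [mul_nonneg (hg0 p) h4]

theorem aemeasurable_of_monotoneOn_antitoneOn {f : ℝ → ℝ≥0∞} {x₀ : ℝ}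
    (hmono : MonotoneOn f (Iio x₀)) (hanti : AntitoneOn f (Ioi x₀)) :
    AEMeasurable f volume := by
  have h1 := aemeasurable_restrict_of_monotoneOn (μ := volume) measurableSet_Iio hmono
  have h2 := aemeasurable_restrict_of_antitoneOn (μ := volume) measurableSet_Ioi hanti
  have h := aemeasurable_union_iff.2 ⟨h1, h2⟩
  rwa [Iio_union_Ioi, restrict_compl_singleton] at h

/-- A function with balanced sign pattern on both sides of the mode has nonnegative integral
against a unimodal measure. -/
theorem integral_nonneg_of_balanced {Q : Measure ℝ} [IsFiniteMeasure Q] {x₀ : ℝ} {c : ℝ≥0∞}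
    {f : ℝ → ℝ≥0∞} (hQ : Q = c • Measure.dirac x₀ + volume.withDensity f)
    (hmono : MonotoneOn f (Iio x₀)) (hanti : AntitoneOn f (Ioi x₀)) {φ : ℝ → ℝ}
    (hφQ : Integrable φ Q) (hφ : ∀ u v, IntervalIntegrable φ volume u v)
    (h0 : 0 ≤ φ x₀) (hR : BalancedRight φ x₀) (hL : BalancedLeft φ x₀) :
    0 ≤ ∫ x, φ x ∂Q := by
  have hf := aemeasurable_of_monotoneOn_antitoneOn hmono hanti
  have hfint : ∫⁻ x, f x ≠ ∞ := by
    have h1 : volume.withDensity f univ ≤ Q univ := by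
      rw [hQ, Measure.add_apply]; exact le_add_self
    rw [withDensity_apply _ MeasurableSet.univ, Measure.restrict_univ] at h1
    exact (h1.trans_lt (measure_lt_top Q univ)).ne
  have hfin : ∀ᵐ x, f x < ∞ := ae_lt_top' hf hfint
  have hexists : ∀ u v : ℝ, u < v → ∃ y ∈ Ioo u v, f y < ∞ := fun u v huv => by
    obtain ⟨y, hy, hy'⟩ := (Measure.dense_of_ae hfin).exists_between huv
    exact ⟨y, hy', hy⟩
  have hfinR : ∀ x ∈ Ioi x₀, f x ≠ ∞ := fun x hx => by
    obtain ⟨y, hy, hy'⟩ := hexists x₀ x hx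
    exact ((hanti hy.1 hx hy.2.le).trans_lt hy').ne
  have hfinL : ∀ x ∈ Iio x₀, f x ≠ ∞ := fun x hx => by
    obtain ⟨y, hy, hy'⟩ := hexists x x₀ hx
    exact ((hmono hx hy.2 hy.1.le).trans_lt hy').ne
  have hgR : AntitoneOn (fun x => (f x).toReal) (Ioi x₀) := fun x hx y hy hxy =>
    ENNReal.toReal_mono (hfinR x hx) (hanti hx hy hxy)
  have hgL : MonotoneOn (fun x => (f x).toReal) (Iio x₀) := fun x hx y hy hxy =>
    ENNReal.toReal_mono (hfinL y hy) (hmono hx hy hxy)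
  rw [hQ] at hφQ
  have hi1 := hφQ.left_of_add_measure
  have hi2 := hφQ.right_of_add_measure
  have hint : Integrable (fun x => (f x).toReal * φ x) := by
    have := (integrable_withDensity_iff_integrable_smul₀' hf hfin (g := φ)).1 hi2
    simpa only [smul_eq_mul] using this
  rw [hQ, integral_add_measure hi1 hi2, integral_smul_measure, integral_dirac,
    integral_withDensity_eq_integral_toReal_smul₀ hf hfin]
  refine add_nonneg (smul_nonneg ENNReal.toReal_nonneg h0) ?_
  simp only [smul_eq_mul]
  have hdisj : Disjoint (Iio x₀) (Ici x₀) :=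
    Set.disjoint_left.2 fun x hx hx' => not_lt.2 (mem_Ici.1 hx') (mem_Iio.1 hx)
  rw [← setIntegral_univ, ← Iio_union_Ici (a := x₀), setIntegral_union hdisj measurableSet_Ici
    hint.integrableOn hint.integrableOn, integral_Ici_eq_integral_Ioi]
  exact add_nonneg
    (hL.setIntegral_mul_nonneg hgL (fun _ => ENNReal.toReal_nonneg) hφ hint)
    (hR.setIntegral_mul_nonneg hgR (fun _ => ENNReal.toReal_nonneg) hφ hint)

/-- The dual certificate: a quadratic minus the indicator of `[1, ∞)`. -/
noncomputable def dualCert (s : ℝ) (y : ℝ) : ℝ :=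
  (4 + 8 * s) / 9 * y ^ 2 - s / 3 - (Ici (1 : ℝ)).indicator (fun _ => 1) y

theorem dualCert_of_lt (s : ℝ) {y : ℝ} (hy : y < 1) :
    dualCert s y = (4 + 8 * s) / 9 * y ^ 2 - s / 3 := by
  simp [dualCert, hy]

theorem dualCert_of_le (s : ℝ) {y : ℝ} (hy : 1 ≤ y) :
    dualCert s y = (4 + 8 * s) / 9 * y ^ 2 - s / 3 - 1 := by
  simp [dualCert, hy]

theorem integral_dualCert (s : ℝ) {u v : ℝ} (huv : u ≤ v) (hu : u < 1) :
    ∫ y in u..v, dualCert s y =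
      (4 + 8 * s) / 9 * ((v ^ 3 - u ^ 3) / 3) - s / 3 * (v - u) - max (v - 1) 0 := by
  have hind : ∫ y in u..v, (Ici (1 : ℝ)).indicator (fun _ => (1 : ℝ)) y = max (v - 1) 0 := by
    have hset : Ioc u v ∩ Ici 1 = Icc 1 v := by
      ext y
      simp only [mem_inter_iff, mem_Ioc, mem_Ici, mem_Icc]
      constructor
      · rintro ⟨⟨-, h⟩, h'⟩; exact ⟨h', h⟩
      · rintro ⟨h, h'⟩; exact ⟨⟨hu.trans_le h, h'⟩, h⟩
    rw [intervalIntegral.integral_of_le huv, setIntegral_indicator measurableSet_Ici, hset,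
      setIntegral_const, smul_eq_mul, mul_one, Measure.real, Real.volume_Icc,
      ENNReal.toReal_ofReal']
  have hii : IntervalIntegrable ((Ici (1 : ℝ)).indicator (fun _ => (1 : ℝ))) volume u v := by
    rw [intervalIntegrable_iff]
    exact (integrableOn_const (by simp)).indicator measurableSet_Ici
  have hpoly : IntervalIntegrable (fun y => (4 + 8 * s) / 9 * y ^ 2 - s / 3) volume u v :=
    Continuous.intervalIntegrable (by fun_prop) u v
  unfold dualCert
  rw [intervalIntegral.integral_sub hpoly hii, hind, intervalIntegral.integral_sub
    (Continuous.intervalIntegrable (by fun_prop) u v)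
    (Continuous.intervalIntegrable (by fun_prop) u v), intervalIntegral.integral_const_mul,
    integral_pow, intervalIntegral.integral_const, smul_eq_mul]
  norm_num
  ring

theorem dualCert_balanced_of_nonpos {m : ℝ} (hm : m ≤ 0) :
    0 ≤ dualCert 0 m ∧ BalancedRight (dualCert 0) m ∧ BalancedLeft (dualCert 0) m := by
  have hlow : ∀ y < 1, 0 ≤ dualCert 0 y := fun y hy => by
    rw [dualCert_of_lt 0 hy]; nlinarith [sq_nonneg y]
  refine ⟨hlow m (by linarith), ⟨1, 3 / 2, by linarith, by norm_num, fun y hy => hlow y hy.2,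
    fun y hy => ?_, fun y hy => ?_, ?_⟩, balancedLeft_of_nonneg fun y hy => hlow y (by linarith)⟩
  · rw [dualCert_of_le 0 hy.1]; nlinarith [hy.1, hy.2]
  · have hy' := mem_Ici.1 hy
    rw [dualCert_of_le 0 (by linarith)]; nlinarith
  · rw [integral_dualCert 0 (by linarith) (by linarith), max_eq_left (by norm_num)]
    have : m ^ 3 ≤ 0 := by nlinarith [mul_nonneg (neg_nonneg.2 hm) (sq_nonneg m)]
    nlinarith

theorem dualCert_balanced_of_one_le {m : ℝ} (hm : 1 ≤ m) :
    0 ≤ dualCert 1 m ∧ BalancedRight (dualCert 1) m ∧ BalancedLeft (dualCert 1) m := by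
  have hhigh : ∀ y, 1 ≤ y → 0 ≤ dualCert 1 y := fun y hy => by
    rw [dualCert_of_le 1 hy]; nlinarith
  refine ⟨hhigh m hm, balancedRight_of_nonneg fun y hy => hhigh y (by linarith),
    ⟨1 / 2, -1 / 2, by norm_num, by linarith, fun y hy => ?_, fun y hy => ?_, fun y hy => ?_, ?_⟩⟩
  · rcases lt_or_ge y 1 with h | h
    · rw [dualCert_of_lt 1 h]; nlinarith [hy.1]
    · exact hhigh y h
  · rw [dualCert_of_lt 1 (by linarith [hy.2])]; nlinarith [hy.1, hy.2]
  · have hy' := mem_Iic.1 hy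
    rw [dualCert_of_lt 1 (by linarith)]; nlinarith
  · rw [integral_dualCert 1 (by linarith) (by norm_num), max_eq_left (by linarith)]
    nlinarith [mul_nonneg (sq_nonneg (m - 1)) (by linarith : 0 ≤ m + 2)]

/-- The cubic inequality behind the middle regime, with `q` the last sign change. -/
theorem middle_cubic {m q : ℝ} (hm0 : 0 ≤ m) (hm1 : m ≤ 1)
    (hqm : 4 * q ^ 2 = 9 - 5 * m ^ 2) :
    9 * (3 - 2 * m ^ 2) * (q - 1) ≤ (2 * q + m) ^ 2 * (q - m) := by
  have hm2 : m ^ 2 ≤ 1 := by nlinarith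
  have hm3 : m ^ 3 ≤ 1 := by nlinarith
  have hfac : 0 ≤ (1 - m) * (27 + 21 * m - 18 * m ^ 2 - 14 * m ^ 3) :=
    mul_nonneg (by linarith) (by nlinarith)
  have hsq : (8 * q ^ 3) ^ 2 ≤ (27 - 18 * m ^ 2 - m ^ 3) ^ 2 := by
    have h6 : (8 * q ^ 3) ^ 2 = (9 - 5 * m ^ 2) ^ 3 := by rw [← hqm]; ring
    rw [h6]
    nlinarith [mul_nonneg (sq_nonneg m) hfac]
  have h8 : 8 * q ^ 3 ≤ 27 - 18 * m ^ 2 - m ^ 3 :=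
    (le_abs_self _).trans (abs_le_of_sq_le_sq hsq (by linarith))
  have e : q * (4 * q ^ 2) = q * (9 - 5 * m ^ 2) := by rw [hqm]
  nlinarith

theorem dualCert_balanced_of_mem_Ioo {m : ℝ} (hm0 : 0 < m) (hm1 : m < 1) :
    let s := m ^ 2 / (3 - 2 * m ^ 2)
    0 ≤ dualCert s m ∧ BalancedRight (dualCert s) m ∧ BalancedLeft (dualCert s) m := by
  intro s
  have hm2 : m ^ 2 < 1 := by nlinarith
  have hD : 0 < 3 * (3 - 2 * m ^ 2) := by linarith
  have hD' : 3 - 2 * m ^ 2 ≠ 0 := by linarith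
  have hA : (4 + 8 * s) / 9 = 4 / (3 * (3 - 2 * m ^ 2)) := by
    have hs : s * (3 - 2 * m ^ 2) = m ^ 2 := div_mul_cancel₀ _ hD'
    rw [eq_div_iff hD.ne']
    linear_combination (8 / 3) * hs
  have hB : s / 3 = m ^ 2 / (3 * (3 - 2 * m ^ 2)) := by
    simp only [s]; field_simp
  have hquad : ∀ y, (4 + 8 * s) / 9 * y ^ 2 - s / 3 =
      (4 * y ^ 2 - m ^ 2) / (3 * (3 - 2 * m ^ 2)) := fun y => by
    rw [hA, hB]; ring
  obtain ⟨q, hq0, hq2⟩ : ∃ q : ℝ, 0 ≤ q ∧ 4 * q ^ 2 = 9 - 5 * m ^ 2 :=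
    ⟨√((9 - 5 * m ^ 2) / 4), Real.sqrt_nonneg _, by rw [Real.sq_sqrt (by linarith)]; ring⟩
  have hq1 : 1 ≤ q := by nlinarith
  have hpos : ∀ y, y < 1 → m ^ 2 ≤ 4 * y ^ 2 → 0 ≤ dualCert s y := fun y hy h => by
    rw [dualCert_of_lt s hy, hquad]; exact div_nonneg (by linarith) hD.le
  refine ⟨hpos m hm1 (by nlinarith), ⟨1, q, hm1, hq1, fun y hy => hpos y hy.2 ?_, fun y hy => ?_,
    fun y hy => ?_, ?_⟩, ⟨m / 2, -m / 2, by linarith, by linarith,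
    fun y hy => hpos y (by linarith [hy.2]) ?_, fun y hy => ?_,
    fun y hy => hpos y (by linarith [mem_Iic.1 hy]) ?_, ?_⟩⟩
  · nlinarith [hy.1]
  · rw [dualCert_of_le s hy.1, hquad, sub_nonpos, div_le_one hD]
    nlinarith [hy.1, hy.2]
  · have hy' := mem_Ici.1 hy
    rw [dualCert_of_le s (by linarith), hquad, sub_nonneg, one_le_div hD]
    nlinarith
  · rw [integral_dualCert s (by linarith) hm1, max_eq_left (by linarith), hA, hB]
    have hc := middle_cubic hm0.le hm1.le hq2
    have : 4 / (3 * (3 - 2 * m ^ 2)) * ((q ^ 3 - m ^ 3) / 3) -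
        m ^ 2 / (3 * (3 - 2 * m ^ 2)) * (q - m) - (q - 1) =
        ((2 * q + m) ^ 2 * (q - m) - 9 * (3 - 2 * m ^ 2) * (q - 1)) /
          (3 * (3 * (3 - 2 * m ^ 2))) := by
      field_simp; ring
    rw [this]
    exact div_nonneg (by linarith) (by linarith)
  · nlinarith [hy.1]
  · rw [dualCert_of_lt s (by linarith [hy.2]), hquad]
    exact div_nonpos_of_nonpos_of_nonneg (by nlinarith [hy.1, hy.2]) hD.le
  · nlinarith [mem_Iic.1 hy]
  · rw [integral_dualCert s (by linarith) (by linarith), max_eq_right (by linarith), hA, hB]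
    refine le_of_eq ?_
    field_simp; ring

theorem exists_dualCert_balanced (m : ℝ) :
    ∃ s ∈ Icc (0 : ℝ) 1,
      0 ≤ dualCert s m ∧ BalancedRight (dualCert s) m ∧ BalancedLeft (dualCert s) m := by
  rcases le_or_gt m 0 with h0 | h0
  · exact ⟨0, by simp, dualCert_balanced_of_nonpos h0⟩
  rcases le_or_gt 1 m with h1 | h1
  · exact ⟨1, by simp, dualCert_balanced_of_one_le h1⟩
  have hm2 : m ^ 2 < 1 := by nlinarith
  refine ⟨m ^ 2 / (3 - 2 * m ^ 2), ⟨div_nonneg (sq_nonneg m) (by linarith), ?_⟩,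
    dualCert_balanced_of_mem_Ioo h0 h1⟩
  rw [div_le_one (by linarith)]; linarith

theorem dualCert_comp_affine (s a : ℝ) {r : ℝ} (hr : 0 < r) (x : ℝ) :
    dualCert s ((x - a) / r) = (4 + 8 * s) / 9 / r ^ 2 * (x - a) ^ 2 - s / 3 -
      (Ici (a + r)).indicator (fun _ => 1) x := by
  have h : (x - a) / r ∈ Ici (1 : ℝ) ↔ x ∈ Ici (a + r) := by
    rw [mem_Ici, mem_Ici, one_le_div hr, le_sub_iff_add_le']
  simp only [dualCert, indicator, h]
  ring

/-- A one-sided Vysochanskij–Petunin inequality about an arbitrary centre. -/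
theorem Unimodal.measureReal_Ici_le {Q : Measure ℝ} [IsProbabilityMeasure Q] (hU : Unimodal Q)
    (h2 : Integrable (fun x => x ^ 2) Q) (a : ℝ) {r τ : ℝ} (hr : 0 < r)
    (hτ : ∫ x, (x - a) ^ 2 ∂Q ≤ τ * r ^ 2) :
    Q.real (Ici (a + r)) ≤ max (4 / 9 * τ) (4 / 3 * τ - 1 / 3) := by
  obtain ⟨x₀, c, f, hQ, hmono, hanti⟩ := hU
  obtain ⟨s, ⟨hs0, hs1⟩, h0, hR, hL⟩ := exists_dualCert_balanced ((x₀ - a) / r)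
  have h1 : Integrable (fun x : ℝ => x) Q :=
    ((memLp_two_iff_integrable_sq aestronglyMeasurable_id).2 h2).integrable one_le_two
  have hsq : Integrable (fun x : ℝ => (x - a) ^ 2) Q := by
    have := (h2.sub (h1.const_mul (2 * a))).add (integrable_const (a ^ 2))
    refine this.congr (Filter.Eventually.of_forall fun x => ?_)
    simp only [Pi.add_apply, Pi.sub_apply]; ring
  have hquad : Integrable (fun x => (4 + 8 * s) / 9 / r ^ 2 * (x - a) ^ 2 - s / 3) Q :=
    (hsq.const_mul _).sub (integrable_const _)
  have hind : Integrable ((Ici (a + r)).indicator fun _ => (1 : ℝ)) Q :=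
    (integrable_const 1).indicator measurableSet_Ici
  have hcert := integral_nonneg_of_balanced hQ hmono hanti
    (φ := fun x => dualCert s ((x - a) / r))
    (by simp only [dualCert_comp_affine s a hr]; exact hquad.sub hind)
    (fun u v => by
      simp only [dualCert_comp_affine s a hr]
      refine (Continuous.intervalIntegrable (by fun_prop) u v).sub ?_
      rw [intervalIntegrable_iff]
      exact (integrableOn_const (by simp)).indicator measurableSet_Ici)
    h0 (hR.comp_affine hr) (hL.comp_affine hr)
  simp only [dualCert_comp_affine s a hr] at hcert
  rw [integral_sub hquad hind, integral_sub (hsq.const_mul _) (integrable_const _),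
    integral_const_mul, integral_indicator measurableSet_Ici, setIntegral_const, integral_const,
    probReal_univ, one_smul, smul_eq_mul, mul_one] at hcert
  have hA : (4 + 8 * s) / 9 / r ^ 2 * ∫ x, (x - a) ^ 2 ∂Q ≤ (4 + 8 * s) / 9 * τ := by
    calc _ ≤ (4 + 8 * s) / 9 / r ^ 2 * (τ * r ^ 2) :=
          mul_le_mul_of_nonneg_left hτ (by positivity)
      _ = _ := by field_simp
  have hl := le_max_left (4 / 9 * τ) (4 / 3 * τ - 1 / 3)
  have hr' := le_max_right (4 / 9 * τ) (4 / 3 * τ - 1 / 3)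
  nlinarith [mul_le_mul_of_nonneg_left hl (sub_nonneg.2 hs1),
    mul_le_mul_of_nonneg_left hr' hs0]

theorem integral_sub_sq_eq {Q : Measure ℝ} [IsProbabilityMeasure Q]
    (h2 : Integrable (fun x => x ^ 2) Q) (a : ℝ) :
    ∫ x, (x - a) ^ 2 ∂Q = distVar Q + (distMean Q - a) ^ 2 := by
  have h1 : Integrable (fun x : ℝ => x) Q :=
    ((memLp_two_iff_integrable_sq aestronglyMeasurable_id).2 h2).integrable one_le_two
  have key : ∀ b : ℝ, ∫ x, (x - b) ^ 2 ∂Q = ∫ x, x ^ 2 ∂Q - 2 * b * distMean Q + b ^ 2 := by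
    intro b
    have : ∀ x : ℝ, (x - b) ^ 2 = x ^ 2 - 2 * b * x + b ^ 2 := fun x => by ring
    simp only [this]
    rw [integral_add (f := fun x => x ^ 2 - 2 * b * x) (h2.sub (h1.const_mul _))
      (integrable_const _), integral_sub h2 (h1.const_mul _), integral_const_mul, integral_const, probReal_univ,
      one_smul, distMean]
  rw [distVar, key, key]; ring

theorem Unimodal.measureReal_Ici_le_pU {μ σ : ℝ} (hσ : 0 < σ) {Q : Measure ℝ}
    (hQ : MemH μ σ Q) (hU : Unimodal Q) {x : ℝ} (hx : μ < x) : Q.real (Ici x) ≤ pU μ σ x := by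
  obtain ⟨hprob, h2, hmean, hvar⟩ := hQ
  set t := (x - μ) / σ with ht
  have ht0 : 0 < t := div_pos (by linarith) hσ
  have hxt : x - μ = σ * t := by rw [ht]; field_simp
  have hpU : pU μ σ x = max (4 / 9 * (1 + t ^ 2)⁻¹) (4 / 3 * (1 + t ^ 2)⁻¹ - 1 / 3) := by
    rw [pU, ← ht, max_eq_left ht0.le]
  set r := x - distMean Q + σ / t with hr
  have hr_lower : σ * t + σ / t ≤ r := by linarith
  have hlow0 : 0 < σ * t + σ / t := by positivity
  have hbound := hU.measureReal_Ici_le h2 (distMean Q - σ / t) (r := r) (τ := (1 + t ^ 2)⁻¹)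
    (by linarith) (by
      rw [integral_sub_sq_eq h2, sub_sub_cancel]
      calc distVar Q + (σ / t) ^ 2 ≤ σ ^ 2 + (σ / t) ^ 2 := by linarith
        _ = (1 + t ^ 2)⁻¹ * (σ * t + σ / t) ^ 2 := by field_simp; ring
        _ ≤ (1 + t ^ 2)⁻¹ * r ^ 2 := by gcongr)
  rw [hpU]
  convert hbound using 3
  rw [hr]; ring

theorem continuous_pU (μ σ : ℝ) : Continuous (pU μ σ) := by
  have h : ∀ x : ℝ, 1 + (max ((x - μ) / σ) 0) ^ 2 ≠ 0 := fun x => by positivity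
  unfold pU
  fun_prop (disch := exact h)

theorem pU_of_le {μ σ : ℝ} (hσ : 0 < σ) {x : ℝ} (hx : x ≤ μ) : pU μ σ x = 1 := by
  have h : (x - μ) / σ ≤ 0 := div_nonpos_of_nonpos_of_nonneg (by linarith) hσ.le
  rw [pU, max_eq_right h]
  norm_num

/-- `pU μ σ` is a p-variable for `H_U(μ,σ)`. -/
theorem stmt_11 (μ σ : ℝ) (hσ : 0 < σ) (Q : Measure ℝ)
    (hQ : MemH μ σ Q) (huni : Unimodal Q) (α : ℝ) (hα : α ∈ Ioo (0:ℝ) 1) :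
    (Q {x | pU μ σ x ≤ α}).toReal ≤ α := by
  have := hQ.1
  have hlt : ∀ x ∈ {x | pU μ σ x ≤ α}, μ < x := fun x hx => by
    by_contra h
    have hx' : pU μ σ x ≤ α := hx
    rw [pU_of_le hσ (not_lt.1 h)] at hx'
    exact absurd hα.2 (not_lt.2 hx')
  rcases eq_empty_or_nonempty {x | pU μ σ x ≤ α} with hS | hS
  · rw [hS, measure_empty, ENNReal.toReal_zero]; exact hα.1.le
  have hbdd : BddBelow {x | pU μ σ x ≤ α} := ⟨μ, fun x hx => (hlt x hx).le⟩
  have hmem := (isClosed_le (continuous_pU μ σ) continuous_const).csInf_mem hS hbdd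
  calc Q.real {x | pU μ σ x ≤ α} ≤ Q.real (Ici (sInf {x | pU μ σ x ≤ α})) :=
        measureReal_mono fun x hx => csInf_le hbdd hx
    _ ≤ pU μ σ (sInf {x | pU μ σ x ≤ α}) :=
        Unimodal.measureReal_Ici_le_pU hσ hQ huni (hlt _ hmem)
    _ ≤ α := hmem
end

section
/- For α ∈ (0,1), it holds that sup over Q ∈ H_US(0,1) of the left-quantile T^Q(1−α) = inf{x ∈ ℝ : Q((-∞,x]) ≥ 1−α} equals √(2/(9α)) if α ∈ (0, 1/6], equals √3·(1−2α) if α ∈ (1/6, 1/2], and equals 0 if α ∈ (1/2, 1). -/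
open MeasureTheory Set
open scoped ENNReal

/-- A distribution `Q` with mean `m` is symmetric if
`Q((-∞, m−x]) = Q([m+x, ∞))` for all `x`. -/
def IsSymmetricDist (Q : Measure ℝ) : Prop :=
  ∀ x : ℝ, Q (Iic (distMean Q - x)) = Q (Ici (distMean Q + x))

/-- Left-quantile function of a distribution on ℝ:
`T^Q(β) = inf {x : Q((-∞,x]) ≥ β}`. -/
noncomputable def leftQuantile (Q : Measure ℝ) (β : ℝ) : ℝ :=
  sInf {x : ℝ | β ≤ (Q (Iic x)).toReal}

/-- Moment bound for a nonincreasing density on the half-line, by comparison with the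
constant value `g t` on `(0, L]`. -/
lemma sq_mul_tail_add_le_integral_sq_mul {g : ℝ → ℝ} (hg : AntitoneOn g (Ioi 0))
    (hg0 : ∀ u ∈ Ioi (0:ℝ), 0 ≤ g u) (hgi : IntegrableOn g (Ioi 0))
    (hgi2 : IntegrableOn (fun u => u ^ 2 * g u) (Ioi 0)) {t L : ℝ} (ht : 0 < t) (hL : t ≤ L) :
    L ^ 2 * (∫ u in Ioi t, g u) + g t * (L ^ 2 * t - 2 * L ^ 3 / 3)
      ≤ ∫ u in Ioi 0, u ^ 2 * g u := by
  have hsub : Ioi t ⊆ Ioi 0 := Ioi_subset_Ioi ht.le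
  have hsubL : Ioi L ⊆ Ioi t := Ioi_subset_Ioi hL
  have hgt := hgi.mono_set hsub
  have hgt2 := hgi2.mono_set hsub
  have hdi : IntegrableOn (fun u => (u ^ 2 - L ^ 2) * g u) (Ioi t) := by
    refine (hgt2.sub (hgt.const_mul (L ^ 2))).congr (.of_forall fun u => ?_)
    simp only [Pi.sub_apply]
    ring
  have split0 : ∫ u in Ioi 0, u ^ 2 * g u
      = (∫ u in Ioc 0 t, u ^ 2 * g u) + ∫ u in Ioi t, u ^ 2 * g u := by
    rw [← setIntegral_union (Ioc_disjoint_Ioi le_rfl) measurableSet_Ioi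
      (hgi2.mono_set Ioc_subset_Ioi_self) hgt2, Ioc_union_Ioi_eq_Ioi ht.le]
  have split1 : ∫ u in Ioi t, u ^ 2 * g u
      = L ^ 2 * (∫ u in Ioi t, g u) + ∫ u in Ioi t, (u ^ 2 - L ^ 2) * g u := by
    rw [← integral_const_mul, ← integral_add (hgt.const_mul _) hdi]
    exact integral_congr_ae (.of_forall fun u => by ring)
  have split2 : ∫ u in Ioi t, (u ^ 2 - L ^ 2) * g u
      = (∫ u in Ioc t L, (u ^ 2 - L ^ 2) * g u) + ∫ u in Ioi L, (u ^ 2 - L ^ 2) * g u := by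
    rw [← setIntegral_union (Ioc_disjoint_Ioi le_rfl) measurableSet_Ioi
      (hdi.mono_set Ioc_subset_Ioi_self) (hdi.mono_set hsubL), Ioc_union_Ioi_eq_Ioi hL]
  have low : g t * (t ^ 3 / 3) ≤ ∫ u in Ioc 0 t, u ^ 2 * g u := by
    have h : ∫ u in Ioc 0 t, u ^ 2 * g t = g t * (t ^ 3 / 3) := by
      rw [← intervalIntegral.integral_of_le ht.le, intervalIntegral.integral_mul_const,
        integral_pow]
      norm_num
      ring
    rw [← h]
    refine setIntegral_mono_on ?_ (hgi2.mono_set Ioc_subset_Ioi_self) measurableSet_Ioc ?_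
    · exact ((by fun_prop : Continuous fun u : ℝ => u ^ 2 * g t).integrableOn_Icc).mono_set
        Ioc_subset_Icc_self
    · intro u hu
      exact mul_le_mul_of_nonneg_left (hg hu.1 ht hu.2) (sq_nonneg u)
  have mid : g t * (L ^ 3 / 3 - t ^ 3 / 3 - L ^ 2 * (L - t))
      ≤ ∫ u in Ioc t L, (u ^ 2 - L ^ 2) * g u := by
    have h : ∫ u in Ioc t L, (u ^ 2 - L ^ 2) * g t
        = g t * (L ^ 3 / 3 - t ^ 3 / 3 - L ^ 2 * (L - t)) := by
      rw [← intervalIntegral.integral_of_le hL, intervalIntegral.integral_mul_const,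
        intervalIntegral.integral_sub (by simp) (by simp), integral_pow]
      norm_num
      ring
    rw [← h]
    refine setIntegral_mono_on ?_ (hdi.mono_set Ioc_subset_Ioi_self) measurableSet_Ioc ?_
    · exact ((by fun_prop :
        Continuous fun u : ℝ => (u ^ 2 - L ^ 2) * g t).integrableOn_Icc).mono_set
        Ioc_subset_Icc_self
    · intro u hu
      refine mul_le_mul_of_nonpos_left (hg ht (ht.trans hu.1) hu.1.le) ?_
      nlinarith [hu.1, hu.2]
  have high : 0 ≤ ∫ u in Ioi L, (u ^ 2 - L ^ 2) * g u := by
    refine setIntegral_nonneg measurableSet_Ioi fun u hu => mul_nonneg ?_ (hg0 u ?_)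
    · have : L < u := hu
      nlinarith
    · exact hsub (hsubL hu)
  rw [split0, split1, split2]
  linarith

lemma mul_add_tail_le_integral {g : ℝ → ℝ} (hg : AntitoneOn g (Ioi 0))
    (hgi : IntegrableOn g (Ioi 0)) {t : ℝ} (ht : 0 < t) :
    t * g t + ∫ u in Ioi t, g u ≤ ∫ u in Ioi 0, g u := by
  have split0 : ∫ u in Ioi 0, g u = (∫ u in Ioc 0 t, g u) + ∫ u in Ioi t, g u := by
    rw [← setIntegral_union (Ioc_disjoint_Ioi le_rfl) measurableSet_Ioi
      (hgi.mono_set Ioc_subset_Ioi_self) (hgi.mono_set (Ioi_subset_Ioi ht.le)),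
      Ioc_union_Ioi_eq_Ioi ht.le]
  have low : t * g t ≤ ∫ u in Ioc 0 t, g u := by
    have h : ∫ _ in Ioc 0 t, g t = t * g t := by
      rw [← intervalIntegral.integral_of_le ht.le]
      simp
    rw [← h]
    exact setIntegral_mono_on (by simp) (hgi.mono_set Ioc_subset_Ioi_self) measurableSet_Ioc
      fun u hu => hg hu.1 ht hu.2
  linarith

/-- The one-sided Gauss inequality for nonincreasing densities, in quantile form. -/
lemma tail_le_of_antitoneOn {g : ℝ → ℝ} (hg : AntitoneOn g (Ioi 0))
    (hg0 : ∀ u ∈ Ioi (0:ℝ), 0 ≤ g u) (hgi : IntegrableOn g (Ioi 0))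
    (hgi2 : IntegrableOn (fun u => u ^ 2 * g u) (Ioi 0))
    (hmass : ∫ u in Ioi 0, g u ≤ 1 / 2) (hmom : ∫ u in Ioi 0, u ^ 2 * g u ≤ 1 / 2)
    {α : ℝ} (hα0 : 0 < α) (hα : α < 1 / 2) :
    ∫ u in Ioi (if α ≤ 1 / 6 then √(2 / (9 * α)) else √3 * (1 - 2 * α)), g u ≤ α := by
  split_ifs with h
  · set t := √(2 / (9 * α)) with htdef
    have ht : 0 < t := Real.sqrt_pos.2 (by positivity)
    have hsq : t ^ 2 = 2 / (9 * α) := Real.sq_sqrt (by positivity)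
    have key := sq_mul_tail_add_le_integral_sq_mul hg hg0 hgi hgi2 ht
      (show t ≤ 3 / 2 * t by linarith)
    set τ := ∫ u in Ioi t, g u
    have h0 : (3 / 2 * t) ^ 2 * t - 2 * (3 / 2 * t) ^ 3 / 3 = 0 := by ring
    rw [h0, mul_zero, add_zero, mul_pow, hsq] at key
    have h1 : (3 / 2 : ℝ) ^ 2 * (2 / (9 * α)) * τ = τ / (2 * α) := by
      field_simp
      norm_num
    rw [h1] at key
    have h2 : τ / (2 * α) ≤ 1 / 2 := key.trans hmom
    rw [div_le_iff₀ (by positivity)] at h2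
    linarith
  · push Not at h
    set r := √(3:ℝ) with hr
    have hr0 : 0 < r := Real.sqrt_pos.2 (by norm_num)
    have hr2 : r ^ 2 = 3 := Real.sq_sqrt (by norm_num)
    set t := r * (1 - 2 * α) with htdef
    have ht : 0 < t := mul_pos hr0 (by linarith)
    have key := sq_mul_tail_add_le_integral_sq_mul hg hg0 hgi hgi2 ht
      (show t ≤ r by nlinarith)
    have hm := mul_add_tail_le_integral hg hgi ht
    set τ := ∫ u in Ioi t, g u
    set s := g t
    have hr3 : r ^ 3 = 3 * r := by rw [pow_succ, hr2]
    rw [hr2, hr3] at key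
    have hc : 3 * t - 2 * (3 * r) / 3 = r * (1 - 6 * α) := by rw [htdef]; ring
    rw [hc] at key
    have h1 : 3 * τ + s * (r * (1 - 6 * α)) ≤ 1 / 2 := key.trans hmom
    have h2 : t * s ≤ 1 / 2 - τ := by linarith
    have h3 : r * (6 * α - 1) * (t * s) ≤ r * (6 * α - 1) * (1 / 2 - τ) :=
      mul_le_mul_of_nonneg_left h2 (mul_nonneg hr0.le (by linarith))
    have h4 : t * (3 * τ + s * (r * (1 - 6 * α))) ≤ t * (1 / 2) :=
      mul_le_mul_of_nonneg_left h1 ht.le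
    have h5 : r * (2 * (τ - α)) ≤ r * 0 := by
      rw [htdef] at h3 h4
      nlinarith
    have := le_of_mul_le_mul_left h5 hr0
    linarith

lemma MeasurableEquiv.map_withDensity {α β : Type*} [MeasurableSpace α] [MeasurableSpace β]
    (e : α ≃ᵐ β) {μ : Measure α} {ν : Measure β} (he : MeasurePreserving e μ ν) (f : α → ℝ≥0∞) :
    (μ.withDensity f).map e = ν.withDensity (f ∘ e.symm) := by
  ext s hs
  rw [Measure.map_apply e.measurable hs, withDensity_apply _ hs,
    withDensity_apply _ (e.measurable hs),
    ← he.setLIntegral_comp_preimage_emb e.measurableEmbedding]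
  simp

lemma Unimodal.map_sub_right {Q : Measure ℝ} (hQ : Unimodal Q) (m : ℝ) :
    Unimodal (Q.map (fun x => x - m)) := by
  obtain ⟨x₀, c, f, rfl, hmono, hanti⟩ := hQ
  refine ⟨x₀ - m, c, fun x => f (x + m), ?_, ?_, ?_⟩
  · rw [Measure.map_add _ _ (by fun_prop), Measure.map_smul, Measure.map_dirac]
    congr 1
    exact (MeasurableEquiv.subRight m).map_withDensity (measurePreserving_sub_right volume m) f
  · intro x hx y hy hxy
    simp only [mem_Iio] at hx hy
    exact hmono (mem_Iio.2 (by linarith)) (mem_Iio.2 (by linarith)) (by linarith)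
  · intro x hx y hy hxy
    simp only [mem_Ioi] at hx hy
    exact hanti (mem_Ioi.2 (by linarith)) (mem_Ioi.2 (by linarith)) (by linarith)

/-- A unimodal distribution that is invariant under `x ↦ -x` has a nonincreasing density on
the positive half-line, wherever its mode was chosen. -/
lemma Unimodal.exists_antitoneOn_density {P : Measure ℝ} (hP : Unimodal P)
    (hsym : P.map (fun x => -x) = P) :
    ∃ f : ℝ → ℝ≥0∞, AntitoneOn f (Ioi 0) ∧
      P.restrict (Ioi 0) = (volume.restrict (Ioi 0)).withDensity f := by
  have main : ∀ (x₀ : ℝ) (c : ℝ≥0∞) (f : ℝ → ℝ≥0∞), x₀ ≤ 0 →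
      P = c • Measure.dirac x₀ + volume.withDensity f → AntitoneOn f (Ioi x₀) →
      ∃ f : ℝ → ℝ≥0∞, AntitoneOn f (Ioi 0) ∧
        P.restrict (Ioi 0) = (volume.restrict (Ioi 0)).withDensity f := by
    intro x₀ c f hx₀ hPf hf
    refine ⟨f, hf.mono (Ioi_subset_Ioi hx₀), ?_⟩
    rw [hPf, Measure.restrict_add, Measure.restrict_smul, restrict_dirac,
      if_neg (by simpa using hx₀), smul_zero, zero_add, restrict_withDensity measurableSet_Ioi]
  obtain ⟨x₀, c, f, hPf, hmono, hanti⟩ := hP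
  rcases le_total x₀ 0 with h | h
  · exact main x₀ c f h hPf hanti
  · refine main (-x₀) c (fun x => f (-x)) (by linarith) ?_ ?_
    · conv_lhs => rw [← hsym, hPf]
      rw [Measure.map_add _ _ (by fun_prop), Measure.map_smul, Measure.map_dirac]
      congr 1
      simpa [Function.comp_def] using (MeasurableEquiv.neg ℝ).map_withDensity
        (Measure.measurePreserving_neg volume) f
    · intro x hx y hy hxy
      simp only [mem_Ioi] at hx hy
      exact hmono (mem_Iio.2 (by linarith)) (mem_Iio.2 (by linarith)) (by linarith)

lemma IsSymmetricDist.map_neg_map_sub {Q : Measure ℝ} [IsFiniteMeasure Q]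
    (hQ : IsSymmetricDist Q) :
    (Q.map (fun x => x - distMean Q)).map (fun x => -x) = Q.map (fun x => x - distMean Q) := by
  rw [Measure.map_map (by fun_prop) (by fun_prop)]
  have : IsFiniteMeasure (Q.map ((fun x => -x) ∘ fun x => x - distMean Q)) :=
    Measure.isFiniteMeasure_map _ _
  refine Measure.ext_of_Iic _ _ fun a => ?_
  rw [Measure.map_apply (by fun_prop) measurableSet_Iic,
    Measure.map_apply (by fun_prop) measurableSet_Iic]
  have h1 : ((fun x => -x) ∘ fun x => x - distMean Q) ⁻¹' Iic a = Ici (distMean Q + -a) := by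
    ext x
    simp only [Function.comp_def, mem_preimage, mem_Iic, mem_Ici]
    constructor <;> intro h <;> linarith
  have h2 : (fun x => x - distMean Q) ⁻¹' Iic a = Iic (distMean Q - -a) := by
    ext x
    simp only [mem_preimage, mem_Iic]
    constructor <;> intro h <;> linarith
  rw [h1, h2, hQ]

lemma setIntegral_Iio_eq_Ioi_of_map_neg {P : Measure ℝ} (hsym : P.map (fun x => -x) = P)
    (φ : ℝ → ℝ) (hφ : ∀ x, φ (-x) = φ x) :
    ∫ x in Iio 0, φ x ∂P = ∫ x in Ioi 0, φ x ∂P := by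
  have h : MeasurePreserving (fun x : ℝ => -x) P P := ⟨by fun_prop, hsym⟩
  have := h.setIntegral_preimage_emb (MeasurableEquiv.neg ℝ).measurableEmbedding φ (Ioi 0)
  simpa [hφ] using this

lemma two_mul_setIntegral_Ioi_le {P : Measure ℝ} (hsym : P.map (fun x => -x) = P)
    {φ : ℝ → ℝ} (hφ : ∀ x, φ (-x) = φ x) (hφ0 : ∀ x, 0 ≤ φ x) (hφi : Integrable φ P) :
    2 * ∫ x in Ioi 0, φ x ∂P ≤ ∫ x, φ x ∂P := by
  have h1 := setIntegral_Iio_eq_Ioi_of_map_neg hsym φ hφ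
  have h2 : ∫ x in Iio 0 ∪ Ioi 0, φ x ∂P = (∫ x in Iio 0, φ x ∂P) + ∫ x in Ioi 0, φ x ∂P :=
    setIntegral_union
      (Set.disjoint_left.2 fun x hx hx' => lt_asymm (mem_Iio.1 hx) (mem_Ioi.1 hx'))
      measurableSet_Ioi hφi.integrableOn hφi.integrableOn
  have h3 : ∫ x in Iio 0 ∪ Ioi 0, φ x ∂P ≤ ∫ x, φ x ∂P :=
    setIntegral_le_integral hφi (.of_forall hφ0)
  linarith

/-- Tail bound for a unimodal distribution symmetric about `0` with second moment at most `1`. -/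
lemma Unimodal.measureReal_Ioi_le {P : Measure ℝ} [IsProbabilityMeasure P] (hP : Unimodal P)
    (hsym : P.map (fun x => -x) = P) (hi : Integrable (fun x => x ^ 2) P)
    (hmom : ∫ x, x ^ 2 ∂P ≤ 1) {α : ℝ} (hα0 : 0 < α) (hα : α < 1 / 2) :
    P.real (Ioi (if α ≤ 1 / 6 then √(2 / (9 * α)) else √3 * (1 - 2 * α))) ≤ α := by
  obtain ⟨f, hf, hPf⟩ := hP.exists_antitoneOn_density hsym
  have hfm : AEMeasurable f (volume.restrict (Ioi 0)) :=
    aemeasurable_restrict_of_antitoneOn measurableSet_Ioi hf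
  have hfint : ∫⁻ x in Ioi 0, f x ≠ ∞ := by
    have h : P.restrict (Ioi 0) univ = ∫⁻ x in Ioi 0, f x := by
      rw [hPf, withDensity_apply _ .univ, Measure.restrict_univ]
    rw [← h]
    exact measure_ne_top _ _
  have hfae : ∀ᵐ x ∂(volume.restrict (Ioi 0)), f x < ∞ := ae_lt_top' hfm hfint
  have hftop : ∀ x ∈ Ioi (0:ℝ), f x ≠ ∞ := by
    intro x hx hxt
    have hsub : Ioc 0 x ⊆ {y | ¬ f y < ∞} := by
      intro y hy
      have := hf hy.1 hx hy.2
      rw [hxt, top_le_iff] at this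
      simp [this]
    have h0 : volume.restrict (Ioi 0) (Ioc 0 x) = 0 := measure_mono_null hsub hfae
    rw [Measure.restrict_apply measurableSet_Ioc,
      inter_eq_left.2 Ioc_subset_Ioi_self, Real.volume_Ioc] at h0
    simp only [sub_zero, ENNReal.ofReal_eq_zero] at h0
    exact absurd hx (not_lt.2 h0)
  set g : ℝ → ℝ := fun x => (f x).toReal with hgdef
  have hint : ∀ φ : ℝ → ℝ, Integrable φ P →
      IntegrableOn (fun x => φ x * g x) (Ioi 0) := by
    intro φ hφ
    have := hφ.restrict (s := Ioi 0)
    rw [hPf, integrable_withDensity_iff_integrable_smul₀' hfm hfae] at this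
    simpa [IntegrableOn, mul_comm] using this
  have hval : ∀ φ : ℝ → ℝ, ∫ x in Ioi 0, φ x ∂P = ∫ x in Ioi 0, φ x * g x := by
    intro φ
    rw [hPf, integral_withDensity_eq_integral_toReal_smul₀ hfm hfae]
    simp [hgdef, mul_comm]
  have hgi : IntegrableOn g (Ioi 0) := by simpa using hint (fun _ => 1) (integrable_const _)
  have hmass : ∫ u in Ioi 0, g u ≤ 1 / 2 := by
    have h1 := two_mul_setIntegral_Ioi_le hsym (φ := fun _ => 1) (fun _ => rfl)
      (fun _ => zero_le_one) (integrable_const _)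
    rw [hval] at h1
    simp only [one_mul, integral_const, probReal_univ, smul_eq_mul, mul_one] at h1
    linarith
  have hmom' : ∫ u in Ioi 0, u ^ 2 * g u ≤ 1 / 2 := by
    have h1 := two_mul_setIntegral_Ioi_le hsym (φ := fun x => x ^ 2) (fun _ => by ring)
      (fun x => sq_nonneg x) hi
    rw [hval] at h1
    linarith
  have key := tail_le_of_antitoneOn (g := g)
    (fun x hx y hy hxy => ENNReal.toReal_mono (hftop x hx) (hf hx hy hxy))
    (fun _ _ => ENNReal.toReal_nonneg) hgi (hint _ hi) hmass hmom' hα0 hα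
  refine le_trans (le_of_eq ?_) key
  set t := if α ≤ 1 / 6 then √(2 / (9 * α)) else √3 * (1 - 2 * α)
  have ht : 0 ≤ t := by
    simp only [t]
    split_ifs
    · positivity
    · exact mul_nonneg (Real.sqrt_nonneg _) (by linarith)
  have hsub : Ioi t ⊆ Ioi (0:ℝ) := Ioi_subset_Ioi ht
  have h1 := hval ((Ioi t).indicator 1)
  rw [setIntegral_indicator measurableSet_Ioi, inter_eq_right.2 hsub] at h1
  have h2 : ∀ x, (Ioi t).indicator (1 : ℝ → ℝ) x * g x = (Ioi t).indicator g x := by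
    intro x
    by_cases hx : x ∈ Ioi t <;> simp [hx]
  simp only [h2] at h1
  rw [setIntegral_indicator measurableSet_Ioi, inter_eq_right.2 hsub] at h1
  rw [← h1]
  simp

lemma leftQuantile_le {Q : Measure ℝ} [IsProbabilityMeasure Q] {β t : ℝ} (hβ : 0 < β)
    (h : β ≤ Q.real (Iic t)) : leftQuantile Q β ≤ t := by
  refine csInf_le ?_ h
  have hlim := (ProbabilityTheory.tendsto_cdf_atBot Q).eventually (gt_mem_nhds hβ)
  obtain ⟨b, hb⟩ := hlim.exists
  refine ⟨b, fun x hx => ?_⟩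
  by_contra! hxb
  have h1 : Q.real (Iic x) ≤ Q.real (Iic b) := measureReal_mono (Iic_subset_Iic.2 hxb.le)
  rw [ProbabilityTheory.cdf_eq_real] at hb
  exact absurd (le_trans hx h1) (not_le.2 hb)

lemma leftQuantile_eq {Q : Measure ℝ} {β t : ℝ} (h : β ≤ Q.real (Iic t))
    (h' : ∀ x < t, Q.real (Iic x) < β) : leftQuantile Q β = t := by
  refine IsLeast.csInf_eq ⟨h, fun x hx => ?_⟩
  by_contra! hxt
  exact absurd hx (not_le.2 (h' x hxt))

lemma IsSymmetricDist.half_le {Q : Measure ℝ} [IsProbabilityMeasure Q] (hQ : IsSymmetricDist Q) :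
    1 / 2 ≤ Q.real (Iic (distMean Q)) := by
  have h1 : Q.real (Iic (distMean Q)) = Q.real (Ici (distMean Q)) := by
    simpa [measureReal_def] using congrArg ENNReal.toReal (hQ 0)
  have h2 := measureReal_union_le (μ := Q) (Iic (distMean Q)) (Ici (distMean Q))
  rw [Iic_union_Ici, probReal_univ] at h2
  linarith

lemma leftQuantile_le_of_memH {Q : Measure ℝ} (hH : MemH 0 1 Q) (hS : IsSymmetricDist Q)
    (hU : Unimodal Q) {α : ℝ} (hα0 : 0 < α) (hα : α < 1 / 2) :
    leftQuantile Q (1 - α) ≤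
      if α ≤ 1 / 6 then √(2 / (9 * α)) else √3 * (1 - 2 * α) := by
  obtain ⟨hprob, hi, hmean, hvar⟩ := hH
  set t := if α ≤ 1 / 6 then √(2 / (9 * α)) else √3 * (1 - 2 * α)
  set m := distMean Q with hm
  have hmeas : Measurable fun x : ℝ => x - m := by fun_prop
  have : IsProbabilityMeasure (Q.map fun x => x - m) :=
    Measure.isProbabilityMeasure_map hmeas.aemeasurable
  have hx : Integrable (fun x : ℝ => x) Q :=
    ((memLp_two_iff_integrable_sq (by fun_prop)).2 hi).integrable (by norm_num)
  have hsq : Integrable (fun x : ℝ => (x - m) ^ 2) Q := by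
    have := (hi.sub (hx.const_mul (2 * m))).add (integrable_const (m ^ 2))
    refine this.congr (.of_forall fun x => ?_)
    simp only [Pi.add_apply, Pi.sub_apply]
    ring
  have key := (hU.map_sub_right m).measureReal_Ioi_le hS.map_neg_map_sub
    ((integrable_map_measure (by fun_prop) hmeas.aemeasurable).2 hsq)
    (by
      rw [integral_map hmeas.aemeasurable (by fun_prop)]
      simpa [distVar] using hvar) hα0 hα
  rw [map_measureReal_apply hmeas measurableSet_Ioi] at key
  have hsub : Ioi t ⊆ (fun x => x - m) ⁻¹' Ioi t := by
    intro x hx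
    simp only [mem_preimage, mem_Ioi] at hx ⊢
    linarith
  refine leftQuantile_le (by linarith) ?_
  rw [← compl_Ioi, probReal_compl_eq_one_sub measurableSet_Ioi]
  have := (measureReal_mono hsub (μ := Q)).trans key
  linarith

/-- The mixture, with weights `1 - p` and `p`, of the Dirac mass at `0` and the uniform
distribution on `[-a, a]`. -/
noncomputable def diracUniform (p a : ℝ) : Measure ℝ :=
  ENNReal.ofReal (1 - p) • Measure.dirac 0 +
    ENNReal.ofReal (p / (2 * a)) • volume.restrict (Icc (-a) a)

section diracUniform

variable {p a : ℝ}

lemma diracUniform_isProbabilityMeasure (hp0 : 0 ≤ p) (hp1 : p ≤ 1) (ha : 0 < a) :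
    IsProbabilityMeasure (diracUniform p a) := by
  constructor
  simp only [diracUniform, Measure.add_apply, Measure.smul_apply, measure_univ, smul_eq_mul,
    mul_one, Measure.restrict_apply_univ, Real.volume_Icc]
  rw [← ENNReal.ofReal_mul (by positivity),
    ← ENNReal.ofReal_add (by linarith) (mul_nonneg (by positivity) (by linarith))]
  have : 1 - p + p / (2 * a) * (a - -a) = 1 := by
    field_simp
    ring
  rw [this, ENNReal.ofReal_one]

lemma integrable_diracUniform {φ : ℝ → ℝ} (hφ : Continuous φ) :
    Integrable φ (diracUniform p a) := by
  refine Integrable.add_measure ?_ ?_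
  · exact (integrable_dirac (by simp)).smul_measure ENNReal.ofReal_ne_top
  · exact hφ.integrableOn_Icc.smul_measure ENNReal.ofReal_ne_top

lemma integral_diracUniform (hp0 : 0 ≤ p) (hp1 : p ≤ 1) (ha : 0 < a) {φ : ℝ → ℝ}
    (hφ : Continuous φ) :
    ∫ x, φ x ∂(diracUniform p a) = (1 - p) * φ 0 + p / (2 * a) * ∫ x in -a..a, φ x := by
  rw [diracUniform, integral_add_measure
    ((integrable_dirac (by simp)).smul_measure ENNReal.ofReal_ne_top)
    (hφ.integrableOn_Icc.smul_measure ENNReal.ofReal_ne_top), integral_smul_measure,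
    integral_smul_measure, integral_dirac, ENNReal.toReal_ofReal (by linarith),
    ENNReal.toReal_ofReal (by positivity), integral_Icc_eq_integral_Ioc,
    intervalIntegral.integral_of_le (by linarith)]
  simp

lemma distMean_diracUniform (hp0 : 0 ≤ p) (hp1 : p ≤ 1) (ha : 0 < a) :
    distMean (diracUniform p a) = 0 := by
  rw [distMean, integral_diracUniform hp0 hp1 ha continuous_id', integral_id]
  simp

lemma distVar_diracUniform (hp0 : 0 ≤ p) (hp1 : p ≤ 1) (ha : 0 < a) :
    distVar (diracUniform p a) = p * a ^ 2 / 3 := by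
  rw [distVar, distMean_diracUniform hp0 hp1 ha]
  simp only [sub_zero]
  rw [integral_diracUniform hp0 hp1 ha (by fun_prop), integral_pow]
  field_simp
  norm_num
  ring

lemma memH_diracUniform (hp0 : 0 ≤ p) (hp1 : p ≤ 1) (ha : 0 < a) (h : p * a ^ 2 ≤ 3) :
    MemH 0 1 (diracUniform p a) := by
  refine ⟨diracUniform_isProbabilityMeasure hp0 hp1 ha, integrable_diracUniform (by fun_prop),
    (distMean_diracUniform hp0 hp1 ha).le, ?_⟩
  rw [distVar_diracUniform hp0 hp1 ha]
  linarith

lemma isSymmetricDist_diracUniform (hp0 : 0 ≤ p) (hp1 : p ≤ 1) (ha : 0 < a) :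
    IsSymmetricDist (diracUniform p a) := by
  intro x
  rw [distMean_diracUniform hp0 hp1 ha, zero_sub, zero_add]
  simp only [diracUniform, Measure.add_apply, Measure.smul_apply,
    Measure.restrict_apply measurableSet_Iic, Measure.restrict_apply measurableSet_Ici]
  congr 2
  · simp [indicator_apply]
  · rw [← Measure.measure_neg volume (Ici x ∩ Icc (-a) a)]
    simp

lemma unimodal_diracUniform : Unimodal (diracUniform p a) := by
  refine ⟨0, ENNReal.ofReal (1 - p),
    (Icc (-a) a).indicator fun _ => ENNReal.ofReal (p / (2 * a)), ?_, ?_, ?_⟩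
  · rw [withDensity_indicator measurableSet_Icc, withDensity_const, diracUniform]
  · intro x hx y hy hxy
    simp only [mem_Iio] at hx hy
    refine indicator_apply_le' (fun h => ?_) fun _ => zero_le
    rw [indicator_of_mem (mem_Icc.2 ⟨h.1.trans hxy, by linarith [h.1]⟩)]
  · intro x hx y hy hxy
    simp only [mem_Ioi] at hx hy
    refine indicator_apply_le' (fun h => ?_) fun _ => zero_le
    rw [indicator_of_mem (mem_Icc.2 ⟨by linarith [h.2], hxy.trans h.2⟩)]

lemma diracUniform_real_Ioi (hp0 : 0 ≤ p) (ha : 0 < a) {x : ℝ} (hx : 0 ≤ x) (hxa : x ≤ a) :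
    (diracUniform p a).real (Ioi x) = p / (2 * a) * (a - x) := by
  have h : Ioi x ∩ Icc (-a) a = Ioc x a := by
    ext y
    simp only [mem_inter_iff, mem_Ioi, mem_Icc, mem_Ioc]
    exact ⟨fun h => ⟨h.1, h.2.2⟩, fun h => ⟨h.1, by linarith [h.1], h.2⟩⟩
  have h0 : (0:ℝ) ∉ Ioi x := not_lt.2 hx
  simp only [measureReal_def, diracUniform, Measure.add_apply, Measure.smul_apply,
    Measure.restrict_apply measurableSet_Ioi, h, Real.volume_Ioc, smul_eq_mul,
    Measure.dirac_apply' _ measurableSet_Ioi, indicator_of_notMem h0, mul_zero, zero_add]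
  rw [ENNReal.toReal_mul, ENNReal.toReal_ofReal (by positivity),
    ENNReal.toReal_ofReal (by linarith)]

lemma leftQuantile_diracUniform (hp0 : 0 < p) (hp1 : p ≤ 1) (ha : 0 < a) {t : ℝ} (ht : 0 < t)
    (hta : t ≤ a) :
    leftQuantile (diracUniform p a) (1 - p / (2 * a) * (a - t)) = t := by
  have := diracUniform_isProbabilityMeasure hp0.le hp1 ha
  have hcompl : ∀ x, (diracUniform p a).real (Iic x) = 1 - (diracUniform p a).real (Ioi x) :=
    fun x => by rw [← compl_Ioi, probReal_compl_eq_one_sub measurableSet_Ioi]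
  refine leftQuantile_eq ?_ fun x hx => ?_
  · rw [hcompl, diracUniform_real_Ioi hp0.le ha ht.le hta]
  · have hx' : max x 0 < t := max_lt hx ht
    have h1 : (diracUniform p a).real (Ioi (max x 0)) ≤ (diracUniform p a).real (Ioi x) :=
      measureReal_mono (Ioi_subset_Ioi (le_max_left _ _))
    rw [diracUniform_real_Ioi hp0.le ha (le_max_right _ _) (by linarith)] at h1
    have h2 : p / (2 * a) * (a - t) < p / (2 * a) * (a - max x 0) :=
      mul_lt_mul_of_pos_left (by linarith) (by positivity)
    rw [hcompl]
    linarith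

lemma leftQuantile_diracUniform_zero {β : ℝ} (hβ0 : 0 < β) (hβ1 : β ≤ 1) :
    leftQuantile (diracUniform 0 a) β = 0 := by
  refine leftQuantile_eq ?_ fun x hx => ?_
  · simpa [diracUniform, measureReal_def] using hβ1
  · simpa [diracUniform, measureReal_def, not_le.2 hx] using hβ0

end diracUniform

/-- for `α ∈ (0,1)`,
`sup_{Q ∈ H_US(0,1)} T^Q(1−α)` equals `√(2/(9α))` for `α ∈ (0,1/6]`,
`√3 (1−2α)` for `α ∈ (1/6,1/2]`, and `0` for `α ∈ (1/2,1)`. -/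
theorem stmt_14 (α : ℝ) (hα : α ∈ Ioo (0:ℝ) 1) :
    IsLUB {r : ℝ | ∃ Q : Measure ℝ, MemH 0 1 Q ∧ IsSymmetricDist Q ∧ Unimodal Q ∧
        r = leftQuantile Q (1 - α)}
      (if α ≤ 1/6 then Real.sqrt (2 / (9 * α))
        else if α ≤ 1/2 then Real.sqrt 3 * (1 - 2 * α) else 0) := by
  obtain ⟨hα0, hα1⟩ := hα
  refine IsGreatest.isLUB ⟨?_, ?_⟩
  · have mem : ∀ p a r : ℝ, 0 ≤ p → p ≤ 1 → 0 < a → p * a ^ 2 ≤ 3 →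
        r = leftQuantile (diracUniform p a) (1 - α) →
        ∃ Q : Measure ℝ, MemH 0 1 Q ∧ IsSymmetricDist Q ∧ Unimodal Q ∧
          r = leftQuantile Q (1 - α) := fun p a r hp0 hp1 ha h hr =>
      ⟨_, memH_diracUniform hp0 hp1 ha h, isSymmetricDist_diracUniform hp0 hp1 ha,
        unimodal_diracUniform, hr⟩
    rw [mem_ofPred_eq]
    split_ifs with h6 h2
    · set t := √(2 / (9 * α))
      have ht : 0 < t := Real.sqrt_pos.2 (by positivity)
      have hsq : t ^ 2 = 2 / (9 * α) := Real.sq_sqrt (by positivity)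
      refine mem (6 * α) (3 / 2 * t) t (by positivity) (by linarith) (by positivity) ?_ ?_
      · rw [mul_pow, hsq]
        field_simp
        norm_num
      · have h := leftQuantile_diracUniform (p := 6 * α) (a := 3 / 2 * t) (t := t)
          (by positivity) (by linarith) (by positivity) ht (by linarith)
        have h1 : 6 * α / (2 * (3 / 2 * t)) * (3 / 2 * t - t) = α := by
          field_simp
          norm_num
        rw [h1] at h
        exact h.symm
    · rcases h2.lt_or_eq with h2 | rfl
      · have hr0 : 0 < √(3:ℝ) := Real.sqrt_pos.2 (by norm_num)
        have hr2 : √(3:ℝ) ^ 2 = 3 := Real.sq_sqrt (by norm_num)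
        refine mem 1 (√3) _ zero_le_one le_rfl hr0 (by rw [hr2, one_mul]) ?_
        have h := leftQuantile_diracUniform (p := 1) (a := √3) (t := √3 * (1 - 2 * α))
          one_pos le_rfl hr0 (mul_pos hr0 (by linarith)) (by nlinarith)
        have h1 : 1 / (2 * √3) * (√3 - √3 * (1 - 2 * α)) = α := by
          field_simp
          ring
        rw [h1] at h
        exact h.symm
      · refine mem 0 1 _ le_rfl zero_le_one one_pos (by norm_num) ?_
        rw [leftQuantile_diracUniform_zero (by norm_num) (by norm_num)]
        norm_num
    · refine mem 0 1 _ le_rfl zero_le_one one_pos (by norm_num) ?_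
      rw [leftQuantile_diracUniform_zero (by linarith) (by linarith)]
  · rintro _ ⟨Q, hH, hS, hU, rfl⟩
    have := hH.1
    by_cases h : α < 1 / 2
    · rw [if_pos h.le]
      exact leftQuantile_le_of_memH hH hS hU hα0 h
    · have hle : leftQuantile Q (1 - α) ≤ 0 :=
        (leftQuantile_le (by linarith) (by linarith [hS.half_le])).trans hH.2.2.1
      refine hle.trans ?_
      split_ifs with h6 h2
      · exact Real.sqrt_nonneg _
      · exact mul_nonneg (Real.sqrt_nonneg _) (by linarith)
      · exact le_rfl
end
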